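/- arXiv:2310.07230 — 2 statements merged into one kernel-verified Lean document; each statement's English description precedes it below -/
import Mathlib

section
/- Let β, γ, B, α, δ ∈ ℝ with B > δ > 0, αβ ≠ 0, x* = −(B−δ)/α, and V(x*) ≠ 0 where V(x) = βx² − γx + 1. Then for every x ∈ ℝ with X^sl(x) ≠ 0, the contact-point equation x·V(hp(x))·X^sl(x) + hp(x)·V(x)·X^sl(hp(x)) = 0 holds if and only if V(x)·(α + γ(B−δ) + αβx²) = 0. Moreover, α + γ(B−δ) + αβx² = αβ·(x² − (γx* − 1)/β), so the real zeros of α + γ(B−δ) + αβx² are exactly x = ±√((γx* − 1)/β) when (γx* − 1)/β ≥ 0, and there are none when (γx* − 1)/β < 0. -/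
/-!
Put `c = B − δ`, `L = c + αx`, `N = α + γc − βcx`, so that `hp(x) = N / (βL)`, and
`K = βc² + γcα + α² = α² V(x*)`. The proof rests on three polynomial identities:
`N² − γNL + βL² = K V(x)`, i.e. `V(hp(x)) = K V(x) / (βL²)`; `βcL + αN = K`, i.e.
`c + α hp(x) = K / (βL)`; and `βxL + N = α + γc + αβx²`. Hence the left side of the contact-point
equation equals `K / ((1 + δ)β²L²) · V(x)(α + γc + αβx²)`, with a nonzero first factor.
-/

/-- `V(x) = βx² − γx + 1`. -/
def Vq (β γ x : ℝ) : ℝ := β * x ^ 2 - γ * x + 1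

/-- The sliding vector field `X^sl(x) = (B − δ + αx)/(1 + δ)`. -/
noncomputable def Xsl (B α δ x : ℝ) : ℝ := (B - δ + α * x) / (1 + δ)

/-- The hyperbola function `hp(x) = (α + γ(B−δ) − β(B−δ)x)/(β(1+δ)X^sl(x))`. -/
noncomputable def hp (β γ B α δ x : ℝ) : ℝ :=
  (α + γ * (B - δ) - β * (B - δ) * x) / (β * (1 + δ) * Xsl B α δ x)

/-- The left side of the contact-point equation in factored form. -/
lemma contact_lhs_eq (β γ B α δ x : ℝ) (hβ : β ≠ 0) (hd : 1 + δ ≠ 0)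
    (hL : B - δ + α * x ≠ 0) :
    x * Vq β γ (hp β γ B α δ x) * Xsl B α δ x +
        hp β γ B α δ x * Vq β γ x * Xsl B α δ (hp β γ B α δ x) =
      (β * (B - δ) ^ 2 + γ * (B - δ) * α + α ^ 2) /
          ((1 + δ) * β ^ 2 * (B - δ + α * x) ^ 2) *
        (Vq β γ x * (α + γ * (B - δ) + α * β * x ^ 2)) := by
  have hhp : hp β γ B α δ x =
      (α + γ * (B - δ) - β * (B - δ) * x) / (β * (B - δ + α * x)) := by
    unfold hp Xsl
    congr 1
    field_simp
  rw [hhp]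
  unfold Vq Xsl
  -- With `L` in place of `B - δ` as the free variable, all denominators become monomials.
  obtain ⟨L, hLdef⟩ : ∃ L, L = B - δ + α * x := ⟨_, rfl⟩
  have hc : B - δ = L - α * x := by rw [hLdef]; ring
  rw [← hLdef] at hL
  rw [← hLdef, hc]
  field_simp
  ring

/-- Equation (3.11): for `B > δ > 0`, `αβ ≠ 0`, `x* = −(B−δ)/α`, `V(x*) ≠ 0`,
the contact-point equation along the hyperbola `y = hp(x)` is equivalent to
`V(x)(α + γ(B−δ) + αβx²) = 0`; moreover `α + γ(B−δ) + αβx² = αβ(x² − (γx*−1)/β)`,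
whose real zeros are `±√((γx*−1)/β)` when `(γx*−1)/β ≥ 0` and none otherwise. -/
theorem contact_point_equation (β γ B α δ xstar : ℝ) (hBδ : B > δ) (hδ : δ > 0)
    (hαβ : α * β ≠ 0) (hxstar : xstar = -(B - δ) / α)
    (hV : Vq β γ xstar ≠ 0) :
    (∀ x : ℝ, Xsl B α δ x ≠ 0 →
      (x * Vq β γ (hp β γ B α δ x) * Xsl B α δ x +
        hp β γ B α δ x * Vq β γ x * Xsl B α δ (hp β γ B α δ x) = 0 ↔
        Vq β γ x * (α + γ * (B - δ) + α * β * x ^ 2) = 0)) ∧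
    (∀ x : ℝ, α + γ * (B - δ) + α * β * x ^ 2
        = α * β * (x ^ 2 - (γ * xstar - 1) / β)) ∧
    ((γ * xstar - 1) / β ≥ 0 →
      ∀ x : ℝ, (α + γ * (B - δ) + α * β * x ^ 2 = 0 ↔
        x = Real.sqrt ((γ * xstar - 1) / β) ∨
        x = -Real.sqrt ((γ * xstar - 1) / β))) ∧
    ((γ * xstar - 1) / β < 0 →
      ∀ x : ℝ, α + γ * (B - δ) + α * β * x ^ 2 ≠ 0) := by
  have hα : α ≠ 0 := left_ne_zero_of_mul hαβ
  have hβ : β ≠ 0 := right_ne_zero_of_mul hαβ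
  have hd : 1 + δ ≠ 0 := by linarith
  have hK : β * (B - δ) ^ 2 + γ * (B - δ) * α + α ^ 2 ≠ 0 := by
    have h : β * (B - δ) ^ 2 + γ * (B - δ) * α + α ^ 2 = α ^ 2 * Vq β γ xstar := by
      rw [hxstar, Vq]
      field_simp
      ring
    rw [h]
    exact mul_ne_zero (pow_ne_zero 2 hα) hV
  have hfac : ∀ x : ℝ, α + γ * (B - δ) + α * β * x ^ 2
      = α * β * (x ^ 2 - (γ * xstar - 1) / β) := by
    intro x
    rw [hxstar]
    field_simp
    ring
  refine ⟨fun x hx => ?_, hfac, fun hr x => ?_, fun hr x => ?_⟩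
  · have hL : B - δ + α * x ≠ 0 := fun h => hx (by rw [Xsl, h, zero_div])
    rw [contact_lhs_eq β γ B α δ x hβ hd hL, mul_eq_zero_iff_left]
    exact div_ne_zero hK (mul_ne_zero (mul_ne_zero hd (pow_ne_zero 2 hβ)) (pow_ne_zero 2 hL))
  · rw [hfac, mul_eq_zero_iff_left hαβ, sub_eq_zero, ← sq_eq_sq_iff_eq_or_eq_neg, Real.sq_sqrt hr]
  · rw [hfac]
    exact mul_ne_zero hαβ (by nlinarith [sq_nonneg x])
end

section
/- Let β < 0, γ > 0, set x_R = 2/(γ + √(γ² − 4β)), and let Π : [0, x_R) → ℝ be a Poincaré half-map datum on [0, x_R). Then there exist B, α, δ ∈ ℝ with B > δ > 0 and α < 0 such that x* = −(B−δ)/α satisfies x_R < x* < 1/γ, X^sl(u) > 0 for all u ∈ [Π(x), x] and all x ∈ [0, x_R), and the slow divergence integral Ĩ(x) = ∫_{Π(x)}^{x} u/X^sl(u) du has a simple zero in (0, x_R), i.e., there is x₀ ∈ (0, x_R) with Ĩ(x₀) = 0 and Ĩ'(x₀) ≠ 0. -/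
/-- The slow divergence integral (up to a positive constant)
`Ĩ(x) = ∫_{P x}^{x} u / X^sl(u) du`. -/
noncomputable def Itil (B α δ : ℝ) (P : ℝ → ℝ) (x : ℝ) : ℝ :=
  ∫ u in (P x)..x, u / Xsl B α δ u

open Set Filter Topology

/-! ### The primitive of `u / V` and the position of the half-map -/

/-- The primitive `K(a) = ∫₀ᵃ u / V(u) du`; the half-map is characterised by `K (P x) = K x`. -/
noncomputable def halfPrim (β γ a : ℝ) : ℝ := ∫ u in (0 : ℝ)..a, u / Vq β γ u

/-- The primitive `-u - c log (c - u)` of `u / (c - u)`, valid for `u < c`. -/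
noncomputable def slowPrim (c u : ℝ) : ℝ := -u - c * Real.log (c - u)

/-- The zero of the affine function interpolating `V` at the two points `p` and `x`. -/
noncomputable def chordZero (β γ x p : ℝ) : ℝ := (1 - β * x * p) / (γ - β * (x + p))

/-- Since `V` is concave and `V 0 = 1`, positivity at `a` propagates to the segment from `0`. -/
lemma Vq_pos_of_mem {β γ a u : ℝ} (hβ : β < 0) (ha : 0 < Vq β γ a) (hu : u ∈ uIcc 0 a) :
    0 < Vq β γ u := by
  unfold Vq at *
  obtain ⟨t, ht0, ht1, rfl⟩ : ∃ t : ℝ, 0 ≤ t ∧ t ≤ 1 ∧ u = t * a := by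
    rw [← segment_eq_uIcc] at hu
    obtain ⟨s, t, hs, ht, hst, rfl⟩ := hu
    exact ⟨t, ht, by linarith, by simp⟩
  -- `V (t a) = t V a + (1 - t) (1 - β t a²)`
  have h1 : 0 ≤ (1 - t) * (-β * (t * a ^ 2)) := by
    have : 0 ≤ t * a ^ 2 := by positivity
    exact mul_nonneg (by linarith) (mul_nonneg (by linarith) this)
  rcases eq_or_lt_of_le ht0 with rfl | h
  · simp
  · nlinarith [mul_pos h ha]

lemma continuous_Vq (β γ : ℝ) : Continuous (Vq β γ) := by
  unfold Vq; fun_prop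

lemma intervalIntegrable_div_Vq {β γ a : ℝ} (hβ : β < 0) (ha : 0 < Vq β γ a) :
    IntervalIntegrable (fun u => u / Vq β γ u) MeasureTheory.volume 0 a :=
  (continuousOn_id.div (continuous_Vq β γ).continuousOn
    fun _ hu => (Vq_pos_of_mem hβ ha hu).ne').intervalIntegrable

lemma hasDerivAt_halfPrim {β γ a : ℝ} (hβ : β < 0) (ha : 0 < Vq β γ a) :
    HasDerivAt (halfPrim β γ) (a / Vq β γ a) a := by
  refine intervalIntegral.integral_hasDerivAt_right (intervalIntegrable_div_Vq hβ ha) ?_ ?_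
  · refine Measurable.stronglyMeasurable ?_ |>.stronglyMeasurableAtFilter
    exact measurable_id.div (continuous_Vq β γ).measurable
  · exact continuousAt_id.div (continuous_Vq β γ).continuousAt ha.ne'

lemma halfPrim_zero (β γ : ℝ) : halfPrim β γ 0 = 0 := by simp [halfPrim]

lemma halfPrim_lt {β γ a b : ℝ} (hβ : β < 0) (ha : 0 < Vq β γ a) (hab : a < b) (hb : b ≤ 0) :
    halfPrim β γ b < halfPrim β γ a := by
  have hV : ∀ u ∈ Icc a 0, 0 < Vq β γ u := fun u hu =>
    Vq_pos_of_mem hβ ha (by rwa [uIcc_of_ge (by linarith)])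
  have : StrictAntiOn (halfPrim β γ) (Icc a 0) := by
    refine strictAntiOn_of_deriv_neg (convex_Icc _ _)
      (fun u hu => (hasDerivAt_halfPrim hβ (hV u hu)).continuousAt.continuousWithinAt) ?_
    intro u hu
    rw [interior_Icc] at hu
    rw [(hasDerivAt_halfPrim hβ (hV u ⟨hu.1.le, hu.2.le⟩)).deriv]
    exact div_neg_of_neg_of_pos hu.2 (hV u ⟨hu.1.le, hu.2.le⟩)
  exact this ⟨le_rfl, by linarith⟩ ⟨hab.le, hb⟩ hab

/-- The reflection `-x` has smaller `K`-value than `x`, because `V (-u) > V u` for `u > 0`. -/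
lemma halfPrim_neg_lt {β γ x : ℝ} (hβ : β < 0) (hγ : 0 < γ) (hx : 0 < x) (hVx : 0 < Vq β γ x) :
    halfPrim β γ (-x) < halfPrim β γ x := by
  have hV : ∀ u ∈ Icc 0 x, 0 < Vq β γ u := fun u hu =>
    Vq_pos_of_mem hβ hVx (by rwa [uIcc_of_le hx.le])
  have hV' : ∀ u ∈ Icc 0 x, Vq β γ u ≤ Vq β γ (-u) := fun u hu => by
    unfold Vq; nlinarith [mul_nonneg hγ.le hu.1]
  have hd : ∀ u ∈ Icc 0 x, HasDerivAt (fun u => halfPrim β γ u - halfPrim β γ (-u))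
      (u / Vq β γ u - (-u) / Vq β γ (-u) * (-1)) u := fun u hu =>
    (hasDerivAt_halfPrim hβ (hV u hu)).sub
      ((hasDerivAt_halfPrim hβ ((hV u hu).trans_le (hV' u hu))).comp u (hasDerivAt_neg u))
  have : StrictMonoOn (fun u => halfPrim β γ u - halfPrim β γ (-u)) (Icc 0 x) := by
    refine strictMonoOn_of_deriv_pos (convex_Icc _ _)
      (fun u hu => (hd u hu).continuousAt.continuousWithinAt) ?_
    intro u hu
    rw [interior_Icc] at hu
    have hu' : u ∈ Icc 0 x := ⟨hu.1.le, hu.2.le⟩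
    rw [(hd u hu').deriv]
    have hlt : Vq β γ u < Vq β γ (-u) := by
      unfold Vq; nlinarith [mul_pos hγ hu.1]
    have := div_lt_div_of_pos_left hu.1 (hV u hu') hlt
    have e : (-u) / Vq β γ (-u) * (-1) = u / Vq β γ (-u) := by ring
    rw [e]; linarith
  have := this ⟨le_rfl, hx.le⟩ ⟨hx.le, le_rfl⟩ hx
  simp [halfPrim_zero] at this
  linarith

/-- The Möbius involution `x ↦ -x / (1 - γ x)` has larger `K`-value than `x`; it satisfies
`V (-x / (1 - γ x)) = V x / (1 - γ x)²`. -/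
lemma halfPrim_lt_moebius {β γ x : ℝ} (hβ : β < 0) (hγ : 0 < γ) (hx : 0 < x)
    (hVx : 0 < Vq β γ x) (hx1 : 0 < 1 - γ * x) :
    halfPrim β γ x < halfPrim β γ (-x / (1 - γ * x)) ∧ 0 < Vq β γ (-x / (1 - γ * x)) := by
  have hV : ∀ u ∈ Icc 0 x, 0 < Vq β γ u := fun u hu =>
    Vq_pos_of_mem hβ hVx (by rwa [uIcc_of_le hx.le])
  have h1 : ∀ u ∈ Icc 0 x, 0 < 1 - γ * u := fun u hu => by
    nlinarith [hu.2]
  have hQ : ∀ u ∈ Icc 0 x, Vq β γ (-u / (1 - γ * u)) = Vq β γ u / (1 - γ * u) ^ 2 :=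
    fun u hu => by
      have h := (h1 u hu).ne'
      have e : Vq β γ (-u / (1 - γ * u)) * (1 - γ * u) ^ 2 = Vq β γ u := by
        have e1 : -u / (1 - γ * u) * (1 - γ * u) = -u := div_mul_cancel₀ _ h
        generalize -u / (1 - γ * u) = q at e1
        unfold Vq
        linear_combination (β * (q * (1 - γ * u) - u) - γ * (1 - γ * u)) * e1
      rw [← e, mul_div_cancel_right₀ _ (pow_ne_zero 2 h)]
  have hQpos : ∀ u ∈ Icc 0 x, 0 < Vq β γ (-u / (1 - γ * u)) := fun u hu => by
    rw [hQ u hu]; exact div_pos (hV u hu) (pow_pos (h1 u hu) 2)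
  refine ⟨?_, hQpos x ⟨hx.le, le_rfl⟩⟩
  have hd : ∀ u ∈ Icc 0 x,
      HasDerivAt (fun u => halfPrim β γ u - halfPrim β γ (-u / (1 - γ * u)))
      (-(γ * u ^ 2 / (Vq β γ u * (1 - γ * u)))) u := fun u hu => by
    have hq : HasDerivAt (fun u => -u / (1 - γ * u)) (-1 / (1 - γ * u) ^ 2) u := by
      have := (hasDerivAt_neg u).div
        (((hasDerivAt_id u).const_mul γ).const_sub 1) (h1 u hu).ne'
      refine this.congr_deriv ?_
      congr 1
      simp only [id]; ring
    refine ((hasDerivAt_halfPrim hβ (hV u hu)).sub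
      ((hasDerivAt_halfPrim hβ (hQpos u hu)).comp u hq)).congr_deriv ?_
    rw [hQ u hu]
    have hv := (hV u hu).ne'
    obtain ⟨w, hw⟩ : ∃ w, w = 1 - γ * u := ⟨_, rfl⟩
    have hw0 : w ≠ 0 := hw ▸ (h1 u hu).ne'
    rw [← hw]
    field_simp
    linear_combination u * hw
  have : StrictAntiOn (fun u => halfPrim β γ u - halfPrim β γ (-u / (1 - γ * u))) (Icc 0 x) := by
    refine strictAntiOn_of_deriv_neg (convex_Icc _ _)
      (fun u hu => (hd u hu).continuousAt.continuousWithinAt) ?_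
    intro u hu
    rw [interior_Icc] at hu
    have hu' : u ∈ Icc 0 x := ⟨hu.1.le, hu.2.le⟩
    rw [(hd u hu').deriv]
    have := hV u hu'
    have := h1 u hu'
    have := hu.1
    exact neg_neg_of_pos (by positivity)
  have := this ⟨le_rfl, hx.le⟩ ⟨hx.le, le_rfl⟩ hx
  simp [halfPrim_zero] at this
  linarith

lemma hasDerivAt_slowPrim {c u : ℝ} (hu : u < c) :
    HasDerivAt (slowPrim c) (u / (c - u)) u := by
  have hne : c - u ≠ 0 := by linarith
  have := (hasDerivAt_neg u).sub ((((hasDerivAt_id u).const_sub c).log hne).const_mul c)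
  refine this.congr_deriv ?_
  simp only [id]
  field_simp; ring

/-- If `p < 0 < x` have the same `K`-value, then `p` lies strictly between the Möbius image
`-x / (1 - γ x)` and the reflection `-x`. -/
lemma halfMap_bounds {β γ x p : ℝ} (hβ : β < 0) (hγ : 0 < γ) (hx : 0 < x) (hp : p < 0)
    (hx1 : 0 < 1 - γ * x) (hVx : 0 < Vq β γ x) (hVp : 0 < Vq β γ p)
    (hK : halfPrim β γ p = halfPrim β γ x) :
    x + p < 0 ∧ 0 < x + p * (1 - γ * x) := by
  constructor
  · by_contra! h
    have h0 := halfPrim_neg_lt hβ hγ hx hVx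
    have hVn : 0 < Vq β γ (-x) := by unfold Vq at *; nlinarith [mul_pos hγ hx]
    rcases eq_or_lt_of_le (show -x ≤ p by linarith) with e | e
    · rw [e] at h0; linarith
    · have := halfPrim_lt hβ hVn e hp.le
      -- `K p < K (-x) < K x = K p`
      linarith
  · by_contra! h
    obtain ⟨h0, -⟩ := halfPrim_lt_moebius hβ hγ hx hVx hx1
    have hle : p ≤ -x / (1 - γ * x) := by rw [le_div_iff₀ hx1]; linarith
    rcases eq_or_lt_of_le hle with e | e
    · rw [← e] at h0; linarith
    · have := halfPrim_lt hβ hVp e (div_nonpos_of_nonpos_of_nonneg (by linarith) hx1.le)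
      linarith

/-- Positivity of the numerator and of the denominator of `chordZero`. -/
lemma chord_pos {β γ x p : ℝ} (hβ : β < 0) (hγ : 0 < γ) (hx : 0 < x)
    (hx1 : 0 < 1 - γ * x) (hVx : 0 < Vq β γ x) (hb : 0 < x + p * (1 - γ * x)) :
    0 < 1 - β * x * p ∧ 0 < γ - β * (x + p) := by
  unfold Vq at hVx
  constructor
  · refine pos_of_mul_pos_left (b := 1 - γ * x) ?_ hx1.le
    nlinarith [mul_pos (mul_pos (neg_pos.2 hβ) hx) hb]
  · refine pos_of_mul_pos_left (b := 1 - γ * x) ?_ hx1.le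
    nlinarith [mul_pos (neg_pos.2 hβ) hb, mul_pos hγ hVx]

/-! ### The chord zero and the slow divergence integral -/

/-- The pointwise consequences of a Poincaré half-map datum on `[0, xR)` that the study of the
slow divergence integral needs; the integral condition enters only through the bounds on `P` and
the formula for its derivative. -/
structure HalfMap (β γ xR : ℝ) (P : ℝ → ℝ) : Prop where
  hβ : β < 0
  hγ : 0 < γ
  one_sub : ∀ x < xR, 0 < 1 - γ * x
  cont : ContinuousOn P (Ico 0 xR)
  zero : P 0 = 0
  neg : ∀ x ∈ Ioo 0 xR, P x < 0
  Vx : ∀ x ∈ Ioo 0 xR, 0 < Vq β γ x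
  VP : ∀ x ∈ Ioo 0 xR, 0 < Vq β γ (P x)
  add_neg : ∀ x ∈ Ioo 0 xR, x + P x < 0
  moebius : ∀ x ∈ Ioo 0 xR, 0 < x + P x * (1 - γ * x)
  deriv : ∀ x ∈ Ioo 0 xR, HasDerivAt P (x * Vq β γ (P x) / (P x * Vq β γ x)) x

namespace HalfMap

variable {β γ xR : ℝ} {P : ℝ → ℝ}

lemma nonpos (H : HalfMap β γ xR P) {x : ℝ} (hx : x ∈ Ico 0 xR) : P x ≤ 0 := by
  rcases eq_or_lt_of_le hx.1 with rfl | h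
  · exact H.zero.le
  · exact (H.neg x ⟨h, hx.2⟩).le

lemma num_den_pos (H : HalfMap β γ xR P) {x : ℝ} (hx : x ∈ Ioo 0 xR) :
    0 < 1 - β * x * P x ∧ 0 < γ - β * (x + P x) :=
  chord_pos H.hβ H.hγ hx.1 (H.one_sub x hx.2) (H.Vx x hx) (H.moebius x hx)

/-- The chord zero strictly decreases along the half-map: its derivative is
`β V(P) (x + P) / (P D²)`, with `D` the denominator, which has the sign of `x + P x`. -/
lemma chordZero_anti (H : HalfMap β γ xR P) :
    StrictAntiOn (fun x => chordZero β γ x (P x)) (Ioo 0 xR) := by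
  have hd : ∀ x ∈ Ioo 0 xR, HasDerivAt (fun x => chordZero β γ x (P x))
      (β * Vq β γ (P x) * (x + P x) / P x / (γ - β * (x + P x)) ^ 2) x := fun x hx => by
    have hP := H.deriv x hx
    have hD := (H.num_den_pos hx).2.ne'
    have hp := (H.neg x hx).ne
    have hv := (H.Vx x hx).ne'
    have hN : HasDerivAt (fun x => 1 - β * x * P x) _ x :=
      (((hasDerivAt_id x).const_mul β).mul hP).const_sub 1
    have hDn : HasDerivAt (fun x => γ - β * (x + P x)) _ x :=
      (((hasDerivAt_id x).add hP).const_mul β).const_sub γ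
    refine (hN.div hDn hD).congr_deriv ?_
    congr 1
    simp only [id, mul_one]
    field_simp
    unfold Vq
    ring
  refine strictAntiOn_of_deriv_neg (convex_Ioo _ _)
    (fun u hu => (hd u hu).continuousAt.continuousWithinAt) ?_
  intro x hx
  rw [interior_Ioo] at hx
  rw [(hd x hx).deriv]
  have h1 : 0 < (x + P x) / P x := div_pos_of_neg_of_neg (H.add_neg x hx) (H.neg x hx)
  have h2 := mul_neg_of_neg_of_pos H.hβ (H.VP x hx)
  have h3 := mul_neg_of_neg_of_pos h2 h1
  rw [← mul_div_assoc] at h3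
  exact div_neg_of_neg_of_pos h3 (pow_pos (H.num_den_pos hx).2 2)

/-- The derivative of the slow divergence integral, factored so that its sign is that of
`chordZero - c`. -/
lemma hasDerivAt_slow (H : HalfMap β γ xR P) {c : ℝ} (hc : xR ≤ c) {x : ℝ} (hx : x ∈ Ioo 0 xR) :
    HasDerivAt (fun x => slowPrim c x - slowPrim c (P x))
      (x * (x - P x) * (γ - β * (x + P x)) / (Vq β γ x * (c - x) * (c - P x)) *
        (chordZero β γ x (P x) - c)) x := by
  have hp := H.neg x hx
  have hxc : x < c := hx.2.trans_le hc
  have hpc : P x < c := by linarith [hx.1]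
  refine ((hasDerivAt_slowPrim hxc).sub
    ((hasDerivAt_slowPrim hpc).comp x (H.deriv x hx))).congr_deriv ?_
  have h1 : c - x ≠ 0 := by linarith
  have h2 : c - P x ≠ 0 := by linarith
  have h3 := (H.Vx x hx).ne'
  have h4 := (H.num_den_pos hx).2.ne'
  have h5 := hp.ne
  unfold chordZero
  field_simp
  unfold Vq
  ring

lemma factor_pos (H : HalfMap β γ xR P) {c : ℝ} (hc : xR ≤ c) {x : ℝ} (hx : x ∈ Ioo 0 xR) :
    0 < x * (x - P x) * (γ - β * (x + P x)) / (Vq β γ x * (c - x) * (c - P x)) := by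
  have hp := H.neg x hx
  have h0 := hx.1
  have h1 : 0 < c - x := by linarith [hx.2]
  have h2 : 0 < c - P x := by linarith
  have h3 := (H.Vx x hx)
  have h4 := (H.num_den_pos hx).2
  have h5 : 0 < x - P x := by linarith
  positivity

lemma continuousOn_slow (H : HalfMap β γ xR P) {c : ℝ} (hc : xR ≤ c) :
    ContinuousOn (fun x => slowPrim c x - slowPrim c (P x)) (Ico 0 xR) := by
  intro x hx
  have hxc : x < c := hx.2.trans_le hc
  have hpc : P x < c := by linarith [H.nonpos hx, hx.1]
  exact (hasDerivAt_slowPrim hxc).continuousAt.continuousWithinAt.sub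
    ((hasDerivAt_slowPrim hpc).continuousAt.comp_continuousWithinAt (H.cont x hx))

/-- The slow divergence integral is positive as long as the chord zero has not gone below `c`. -/
lemma slow_pos (H : HalfMap β γ xR P) {c : ℝ} (hc : xR ≤ c) {y : ℝ} (hy : y ∈ Ioo 0 xR)
    (hcy : c ≤ chordZero β γ y (P y)) : 0 < slowPrim c y - slowPrim c (P y) := by
  have : StrictMonoOn (fun x => slowPrim c x - slowPrim c (P x)) (Icc 0 y) := by
    refine strictMonoOn_of_deriv_pos (convex_Icc _ _)
      ((H.continuousOn_slow hc).mono fun u hu => ⟨hu.1, hu.2.trans_lt hy.2⟩) ?_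
    intro u hu
    rw [interior_Icc] at hu
    have hu' : u ∈ Ioo 0 xR := ⟨hu.1, hu.2.trans hy.2⟩
    rw [(H.hasDerivAt_slow hc hu').deriv]
    have h := H.chordZero_anti hu' hy hu.2
    exact mul_pos (H.factor_pos hc hu') (by simp only at h; linarith)
  have := this ⟨le_rfl, hy.1.le⟩ ⟨hy.1.le, le_rfl⟩ hy.1
  simpa [H.zero] using this

/-- In the limit case `c = 1 / γ` the slow divergence integral is negative throughout. -/
lemma slow_neg (H : HalfMap β γ xR P) (hc : xR ≤ 1 / γ) {y : ℝ} (hy : y ∈ Ioo 0 xR) :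
    slowPrim (1 / γ) y - slowPrim (1 / γ) (P y) < 0 := by
  have : StrictAntiOn (fun x => slowPrim (1 / γ) x - slowPrim (1 / γ) (P x)) (Icc 0 y) := by
    refine strictAntiOn_of_deriv_neg (convex_Icc _ _)
      ((H.continuousOn_slow hc).mono fun u hu => ⟨hu.1, hu.2.trans_lt hy.2⟩) ?_
    intro u hu
    rw [interior_Icc] at hu
    have hu' : u ∈ Ioo 0 xR := ⟨hu.1, hu.2.trans hy.2⟩
    rw [(H.hasDerivAt_slow hc hu').deriv]
    refine mul_neg_of_pos_of_neg (H.factor_pos hc hu') ?_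
    rw [sub_neg, chordZero, div_lt_div_iff₀ (H.num_den_pos hu').2 H.hγ]
    nlinarith [mul_neg_of_neg_of_pos H.hβ (H.moebius u hu')]
  have := this ⟨le_rfl, hy.1.le⟩ ⟨hy.1.le, le_rfl⟩ hy.1
  simpa [H.zero] using this

/-- For every `c < 1 / γ` the chord zero exceeds `c` close to the origin. -/
lemma exists_chordZero_gt (H : HalfMap β γ xR P) {c x₁ : ℝ} (hc : c < 1 / γ)
    (hx₁ : x₁ ∈ Ioo 0 xR) : ∃ y ∈ Ioo 0 x₁, c < chordZero β γ y (P y) := by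
  have hR : 0 < xR := hx₁.1.trans hx₁.2
  have hP : Tendsto P (𝓝[>] 0) (𝓝 0) := by
    have := (H.cont 0 ⟨le_rfl, hR⟩).mono_left (nhdsWithin_mono 0 Ioo_subset_Ico_self)
    rwa [nhdsWithin_Ioo_eq_nhdsGT hR, H.zero] at this
  have hid : Tendsto (fun x : ℝ => x) (𝓝[>] 0) (𝓝 0) := nhdsWithin_le_nhds
  have ht : Tendsto (fun x => chordZero β γ x (P x)) (𝓝[>] 0) (𝓝 (1 / γ)) := by
    have h := (((hid.const_mul β).mul hP).const_sub 1).div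
      (((hid.add hP).const_mul β).const_sub γ) (by simpa using H.hγ.ne')
    have e : (1 - β * 0 * 0) / (γ - β * (0 + 0)) = 1 / γ := by simp
    rw [e] at h
    exact h
  obtain ⟨y, hy1, hy2⟩ := ((ht.eventually (lt_mem_nhds hc)).and
    (Ioo_mem_nhdsGT hx₁.1)).exists
  exact ⟨y, hy2, hy1⟩

/-- A parameter `c ∈ (xR, 1 / γ)` and a zero of the slow divergence integral, at which the chord
zero differs from `c`. -/
lemma exists_zero (H : HalfMap β γ xR P) (hR : 0 < xR) (hR1 : xR < 1 / γ) :
    ∃ c, xR < c ∧ c < 1 / γ ∧ ∃ x₀ ∈ Ioo 0 xR,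
      slowPrim c x₀ - slowPrim c (P x₀) = 0 ∧ chordZero β γ x₀ (P x₀) - c ≠ 0 := by
  have hx₁ : xR / 2 ∈ Ioo 0 xR := ⟨by linarith, by linarith⟩
  have hneg := H.slow_neg hR1.le hx₁
  have hp := H.neg _ hx₁
  -- continuity in `c`, so that negativity at `c = 1 / γ` persists for `c` slightly smaller
  have hcont : ContinuousAt (fun c => slowPrim c (xR / 2) - slowPrim c (P (xR / 2))) (1 / γ) := by
    unfold slowPrim
    have h1 : 1 / γ - xR / 2 ≠ 0 := by linarith
    have h2 : 1 / γ - P (xR / 2) ≠ 0 := by linarith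
    fun_prop (disch := assumption)
  have hev : ∀ᶠ c in 𝓝[<] (1 / γ), slowPrim c (xR / 2) - slowPrim c (P (xR / 2)) < 0 :=
    (hcont.eventually (gt_mem_nhds hneg)).filter_mono nhdsWithin_le_nhds
  obtain ⟨c, hc, hcR, hc1⟩ := (hev.and (Ioo_mem_nhdsLT hR1)).exists
  obtain ⟨y, hy, hcy⟩ := H.exists_chordZero_gt hc1 hx₁
  have hypos := H.slow_pos hcR.le ⟨hy.1, hy.2.trans hx₁.2⟩ hcy.le
  obtain ⟨x₀, hx₀, h0⟩ := intermediate_value_Icc' hy.2.le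
    ((H.continuousOn_slow hcR.le).mono fun u hu => ⟨hy.1.le.trans hu.1, hu.2.trans_lt hx₁.2⟩)
    ⟨hc.le, hypos.le⟩
  have hx₀' : x₀ ∈ Ioo 0 xR := ⟨hy.1.trans_le hx₀.1, hx₀.2.trans_lt hx₁.2⟩
  refine ⟨c, hcR, hc1, x₀, hx₀', h0, fun h => ?_⟩
  exact (H.slow_pos hcR.le hx₀' (by linarith)).ne' h0

end HalfMap

/-! ### From the integral condition to the half-map data -/

/-- Differentiating `K (P x) = K x` gives `P x * P' x / V (P x) = x / V x`. -/
lemma hasDerivAt_halfMap {β γ xR : ℝ} {P : ℝ → ℝ} (hβ : β < 0)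
    (hdiff : DifferentiableOn ℝ P (Ico 0 xR)) (hPneg : ∀ x ∈ Ioo 0 xR, P x < 0)
    (hVx : ∀ x ∈ Ioo 0 xR, 0 < Vq β γ x) (hVP : ∀ x ∈ Ioo 0 xR, 0 < Vq β γ (P x))
    (hK : ∀ x ∈ Ioo 0 xR, halfPrim β γ (P x) = halfPrim β γ x) {x : ℝ} (hx : x ∈ Ioo 0 xR) :
    HasDerivAt P (x * Vq β γ (P x) / (P x * Vq β γ x)) x := by
  have hd : HasDerivAt P (deriv P x) x :=
    (hdiff.differentiableAt (Ico_mem_nhds hx.1 hx.2)).hasDerivAt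
  have h1 := (hasDerivAt_halfPrim hβ (hVP x hx)).comp x hd
  have h2 : HasDerivAt (halfPrim β γ ∘ P) (x / Vq β γ x) x :=
    (hasDerivAt_halfPrim hβ (hVx x hx)).congr_of_eventuallyEq
      (Filter.eventually_of_mem (Ioo_mem_nhds hx.1 hx.2) hK)
  have h := h1.unique h2
  have e : deriv P x = x * Vq β γ (P x) / (P x * Vq β γ x) := by
    have a1 := (hVP x hx).ne'
    have a2 := (hVx x hx).ne'
    have a3 := (hPneg x hx).ne
    field_simp at h ⊢
    linarith
  rwa [e] at hd

/-- Existence part of Theorem 3.3, Statement 3: for `β < 0`, `γ > 0`,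
`x_R = 2/(γ + √(γ² − 4β))` and a Poincaré half-map datum on `[0, x_R)`, there
exist `B > δ > 0` and `α < 0` with `x_R < x* = −(B−δ)/α < 1/γ`, `X^sl > 0` on
the relevant intervals, such that the slow divergence integral has a simple zero
in `(0, x_R)`. -/
theorem slow_divergence_integral_simple_zero_exists (β γ xR : ℝ)
    (hβ : β < 0) (hγ : 0 < γ)
    (hxR : xR = 2 / (γ + Real.sqrt (γ ^ 2 - 4 * β)))
    (P : ℝ → ℝ)
    (hdiff : DifferentiableOn ℝ P (Set.Ico 0 xR))
    (hP0 : P 0 = 0)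
    (hPneg : ∀ x ∈ Set.Ioo 0 xR, P x < 0)
    (hV : ∀ x ∈ Set.Ioo 0 xR, ∀ u ∈ Set.Icc (P x) x, Vq β γ u > 0)
    (hint : ∀ x ∈ Set.Ioo 0 xR, ∫ u in (P x)..x, u / Vq β γ u = 0) :
    ∃ B α δ : ℝ, B > δ ∧ δ > 0 ∧ α < 0 ∧
      xR < -(B - δ) / α ∧ -(B - δ) / α < 1 / γ ∧
      (∀ x ∈ Set.Ico 0 xR, ∀ u ∈ Set.Icc (P x) x, Xsl B α δ u > 0) ∧
      ∃ x₀ ∈ Set.Ioo 0 xR, Itil B α δ P x₀ = 0 ∧ deriv (Itil B α δ P) x₀ ≠ 0 := by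
  have hs : γ < Real.sqrt (γ ^ 2 - 4 * β) :=
    Real.lt_sqrt_of_sq_lt (by linarith)
  have hR : 0 < xR := by rw [hxR]; exact div_pos two_pos (by linarith)
  have hR1 : xR < 1 / γ := by
    rw [hxR, div_lt_div_iff₀ (by linarith) hγ]; linarith
  have hone : ∀ x < xR, 0 < 1 - γ * x := fun x hx => by
    have h : x < 1 / γ := hx.trans hR1
    rw [lt_div_iff₀ hγ] at h
    linarith
  have hVx : ∀ x ∈ Ioo 0 xR, 0 < Vq β γ x := fun x hx =>
    hV x hx x ⟨by linarith [hPneg x hx, hx.1], le_rfl⟩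
  have hVP : ∀ x ∈ Ioo 0 xR, 0 < Vq β γ (P x) := fun x hx =>
    hV x hx (P x) ⟨le_rfl, by linarith [hPneg x hx, hx.1]⟩
  have hK : ∀ x ∈ Ioo 0 xR, halfPrim β γ (P x) = halfPrim β γ x := fun x hx => by
    have h := intervalIntegral.integral_interval_sub_left
      (intervalIntegrable_div_Vq hβ (hVx x hx)) (intervalIntegrable_div_Vq hβ (hVP x hx))
    rw [hint x hx] at h
    unfold halfPrim
    linarith
  have hb := fun x (hx : x ∈ Ioo 0 xR) => halfMap_bounds hβ hγ hx.1 (hPneg x hx) (hone x hx.2)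
    (hVx x hx) (hVP x hx) (hK x hx)
  have H : HalfMap β γ xR P := ⟨hβ, hγ, hone, hdiff.continuousOn, hP0, hPneg, hVx, hVP,
    fun x hx => (hb x hx).1, fun x hx => (hb x hx).2,
    fun x hx => hasDerivAt_halfMap hβ hdiff hPneg hVx hVP hK hx⟩
  obtain ⟨c, hc, hc1, x₀, hx₀, h0, hne⟩ := H.exists_zero hR hR1
  -- with `δ = 1`, `α = -2`, `B = 1 + 2c` the sliding vector field is exactly `c - u`
  have hX : ∀ u, Xsl (1 + 2 * c) (-2) 1 u = c - u := fun u => by unfold Xsl; ring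
  have hI : ∀ x ∈ Ioo 0 xR, Itil (1 + 2 * c) (-2) 1 P x = slowPrim c x - slowPrim c (P x) := by
    intro x hx
    have hlt : ∀ u ∈ uIcc (P x) x, u < c := fun u hu => by
      rw [uIcc_of_le (by linarith [hPneg x hx, hx.1])] at hu
      linarith [hu.2, hx.2]
    unfold Itil
    simp only [hX]
    refine intervalIntegral.integral_eq_sub_of_hasDerivAt
      (fun u hu => hasDerivAt_slowPrim (hlt u hu)) (ContinuousOn.intervalIntegrable ?_)
    exact continuousOn_id.div (continuousOn_const.sub continuousOn_id)
      fun u hu => (sub_pos.2 (hlt u hu)).ne'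
  have hxs : -(1 + 2 * c - 1) / (-2) = c := by ring
  refine ⟨1 + 2 * c, -2, 1, by linarith, one_pos, by norm_num, by rwa [hxs], by rwa [hxs],
    fun x hx u hu => ?_, x₀, hx₀, (hI x₀ hx₀).trans h0, ?_⟩
  · rw [hX]; linarith [hu.2, hx.2]
  · rw [((H.hasDerivAt_slow hc.le hx₀).congr_of_eventuallyEq
      (Filter.eventually_of_mem (Ioo_mem_nhds hx₀.1 hx₀.2) hI)).deriv]
    exact mul_ne_zero (H.factor_pos hc.le hx₀).ne' hne
end
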